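/- arXiv:2006.05776 — 3 statements merged into one kernel-verified Lean document; each statement's English description precedes it below -/
import Mathlib

section
/- Let p, q > 1 and let f, g, h, γ : [0,∞) → ℝ be continuous monotone functions with lim_{s→+∞} g(s) = +∞, such that for every M > 0, lim_{s→+∞} f(M (g(s))^{1/(q−1)})/s^{p−1} = 0, and lim_{s→+∞} h(s)/s^{p−1} = 0, lim_{s→+∞} γ(s)/s^{q−1} = 0. Then for any constants K₁, K₂, K₃, K₄ > 0 and μ ≥ 0 there exists C₀ > 0 such that for every C ≥ C₀ both inequalities hold: (i) (C K₁)^{p−1} ≥ f((K₂ g(C K₃))^{1/(q−1)} K₄) + μ h(C K₃), and (ii) g(C K₃) ≥ γ((K₂ g(C K₃))^{1/(q−1)} K₄). -/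
/-!
Put `s = C * K3` and `M = K2 ^ (q - 1)⁻¹ * K4`. Once `g s ≥ 0`, the common argument of `f` and
`gam` is `t = M * g s ^ (q - 1)⁻¹`. For the first inequality, the left side divided by `s ^ (p - 1)`
tends to `0`, while the right side divided by `s ^ (p - 1)` is the positive constant
`(K1 / K3) ^ (p - 1)`. For the second, `t → ∞` since `g s → ∞`, and `gam t = o(t ^ (q - 1))` with
`t ^ (q - 1) = M ^ (q - 1) * g s`.
-/

open Filter Topology Set

/-- The real-analysis lemma behind the choice of the large constant `C`
in the supersolution construction: under the growth conditions (H3)–(H4), for any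
positive constants `K₁, K₂, K₃, K₄` and any `μ ≥ 0`, both inequality (2.6) and the
domination of `γ` by `g` hold for all sufficiently large `C`. -/
theorem large_constant_choice (p q : ℝ) (hp : 1 < p) (hq : 1 < q)
    (f g hh gam : ℝ → ℝ)
    (hfc : ContinuousOn f (Ici 0)) (hgc : ContinuousOn g (Ici 0))
    (hhc : ContinuousOn hh (Ici 0)) (hgamc : ContinuousOn gam (Ici 0))
    (hfm : MonotoneOn f (Ici 0) ∨ AntitoneOn f (Ici 0))
    (hgm : MonotoneOn g (Ici 0) ∨ AntitoneOn g (Ici 0))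
    (hhm : MonotoneOn hh (Ici 0) ∨ AntitoneOn hh (Ici 0))
    (hgamm : MonotoneOn gam (Ici 0) ∨ AntitoneOn gam (Ici 0))
    (hg_top : Tendsto g atTop atTop)
    -- (H3)
    (H3 : ∀ M > (0:ℝ),
      Tendsto (fun s : ℝ => f (M * (g s) ^ ((q - 1)⁻¹)) / s ^ (p - 1)) atTop (𝓝 0))
    -- (H4)
    (H4h : Tendsto (fun s : ℝ => hh s / s ^ (p - 1)) atTop (𝓝 0))
    (H4gam : Tendsto (fun s : ℝ => gam s / s ^ (q - 1)) atTop (𝓝 0))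
    (K1 K2 K3 K4 : ℝ) (hK1 : 0 < K1) (hK2 : 0 < K2) (hK3 : 0 < K3) (hK4 : 0 < K4)
    (μ : ℝ) (hμ : 0 ≤ μ) :
    ∃ C0 > (0:ℝ), ∀ C : ℝ, C0 ≤ C →
      f ((K2 * g (C * K3)) ^ ((q - 1)⁻¹) * K4) + μ * hh (C * K3) ≤ (C * K1) ^ (p - 1) ∧
      gam ((K2 * g (C * K3)) ^ ((q - 1)⁻¹) * K4) ≤ g (C * K3) := by
  have hq1 : 0 < q - 1 := by linarith
  set e := (q - 1)⁻¹ with he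
  have he0 : 0 < e := inv_pos.mpr hq1
  set M := K2 ^ e * K4 with hM
  have hM0 : 0 < M := by positivity
  have harg : ∀ s, 0 ≤ g s → (K2 * g s) ^ e * K4 = M * g s ^ e := by
    intro s hs
    rw [Real.mul_rpow hK2.le hs, hM]
    ring
  have hc : 0 < (K1 / K3) ^ (p - 1) := by positivity
  have hsum : Tendsto
      (fun s : ℝ => f (M * g s ^ e) / s ^ (p - 1) + μ * (hh s / s ^ (p - 1))) atTop (𝓝 0) := by
    simpa using (H3 M hM0).add (H4h.const_mul μ)
  have ht : Tendsto (fun s : ℝ => M * g s ^ e) atTop atTop :=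
    ((tendsto_rpow_atTop he0).comp hg_top).const_mul_atTop hM0
  have hd : 0 < (M ^ (q - 1))⁻¹ := by positivity
  have key : ∀ᶠ s : ℝ in atTop,
      f ((K2 * g s) ^ e * K4) + μ * hh s ≤ (s / K3 * K1) ^ (p - 1) ∧
      gam ((K2 * g s) ^ e * K4) ≤ g s := by
    filter_upwards [hsum.eventually_lt_const hc, (H4gam.comp ht).eventually_lt_const hd,
      hg_top.eventually_gt_atTop 0, eventually_gt_atTop (0 : ℝ)] with s h1 h2 hg hs
    rw [harg s hg.le]
    constructor
    · have hsp : 0 < s ^ (p - 1) := by positivity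
      have hsplit : (s / K3 * K1) ^ (p - 1) = (K1 / K3) ^ (p - 1) * s ^ (p - 1) := by
        rw [← Real.mul_rpow (by positivity) hs.le]
        congr 1
        ring
      rw [← mul_div_assoc, ← add_div, div_lt_iff₀ hsp] at h1
      rw [hsplit]
      exact h1.le
    · have htp : (M * g s ^ e) ^ (q - 1) = M ^ (q - 1) * g s := by
        rw [Real.mul_rpow hM0.le (by positivity), he, Real.rpow_inv_rpow hg.le hq1.ne']
      have hMp : 0 < M ^ (q - 1) := by positivity
      simp only [Function.comp_apply] at h2
      rw [htp, div_lt_iff₀ (by positivity), inv_mul_cancel_left₀ hMp.ne'] at h2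
      exact h2.le
  have hCK : Tendsto (fun C : ℝ => C * K3) atTop atTop := tendsto_id.atTop_mul_const hK3
  obtain ⟨C1, hC1⟩ := eventually_atTop.mp (hCK.eventually key)
  refine ⟨max C1 1, by positivity, fun C hC => ?_⟩
  have := hC1 C ((le_max_left _ _).trans hC)
  rwa [mul_div_cancel_right₀ C hK3.ne'] at this
end

section
/- Assume σ_p > 1 and σ_q > 1, that φ_p ≤ C₁ φ_q and φ_q ≤ C₂ φ_p on Ω for constants C₁, C₂ > 0, that f and g are monotone increasing, and that f, h are of class C^{⌊p⌋} near 0 with f(0) = h(0) = 0 and f^{(k)}(0) = h^{(k)}(0) = 0 for k = 1, …, ⌊p−1⌋, while g, γ are of class C^{⌊q⌋} near 0 with g(0) = γ(0) = 0 and g^{(l)}(0) = γ^{(l)}(0) = 0 for l = 1, …, ⌊q−1⌋. Then there exists θ > 0 such that for every ρ ∈ (0, θ] and every x ∈ Ω: (σ_p − 1)(ρ φ_p(x))^{p−1} > λ₁ f(ρ φ_q(x)) + μ₁ h(ρ φ_p(x)) and (σ_q − 1)(ρ φ_q(x))^{q−1} > λ₂ g(ρ φ_p(x)) + μ₂ γ(ρ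 φ_q(x)). -/
/-!
A function of class `C^⌊p⌋` whose derivatives of order `0, …, ⌊p⌋ - 1` vanish at `0` is
`O(t ^ ⌊p⌋)` as `t → 0⁺` by Taylor's theorem, hence `o(t ^ (p - 1))` because `⌊p⌋ > p - 1`
(`flat_le_rpow`). Both eigenfunctions are bounded, being continuous on the compact closure of the
domain, so `ρ φ_p` and `ρ φ_q` are uniformly small with `ρ`; the comparison `φ_q ≤ C₂ φ_p`
(respectively `φ_p ≤ C₁ φ_q`) lets every term be measured against a single power of `ρ φ_p`
(respectively `ρ φ_q`), as in `flat_pair_lt`.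
-/

open Filter Topology Set

/-- A function of class `C^⌊p⌋` near `0`, flat at `0` to order `⌊p - 1⌋`, is bounded above by any
positive multiple of `t ^ (p - 1)` for small `t > 0`. -/
lemma flat_le_rpow {p : ℝ} (hp : 1 < p) {F : ℝ → ℝ} {ε : ℝ} (hε : 0 < ε)
    (hF : ContDiffOn ℝ (⌊p⌋₊) F (Ioo (-ε) ε))
    (hF0 : ∀ k ≤ ⌊p - 1⌋₊, iteratedDeriv k F 0 = 0) {δ : ℝ} (hδ : 0 < δ) :
    ∃ η > (0 : ℝ), ∀ t, 0 < t → t < η → F t ≤ δ * t ^ (p - 1) := by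
  obtain ⟨n, hn⟩ : ∃ n, n = ⌊p - 1⌋₊ := ⟨_, rfl⟩
  have hpn : ⌊p⌋₊ = n + 1 := by
    rw [hn, ← Nat.floor_add_one (by linarith : (0 : ℝ) ≤ p - 1), sub_add_cancel]
  have hlt : p - 1 < (n : ℝ) + 1 := by
    rw [hn]
    exact Nat.lt_floor_add_one _
  rw [hpn] at hF
  rw [← hn] at hF0
  have hb : (0 : ℝ) < ε / 2 := by linarith
  have hsub : Icc (0 : ℝ) (ε / 2) ⊆ Ioo (-ε) ε := fun x hx =>
    ⟨by linarith [hx.1], by linarith [hx.2]⟩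
  have hat : ContDiffAt ℝ ((n + 1 : ℕ) : WithTop ℕ∞) F 0 :=
    hF.contDiffAt (Ioo_mem_nhds (by linarith) hε)
  obtain ⟨C, hC⟩ := exists_taylor_mean_remainder_bound (n := n) hb.le
    (by exact_mod_cast hF.mono hsub)
  have hT : ∀ x, taylorWithinEval F n (Icc 0 (ε / 2)) 0 x = 0 := by
    intro x
    rw [taylor_within_apply]
    refine Finset.sum_eq_zero fun k hk => ?_
    have hk' : k ≤ n := Nat.lt_succ_iff.mp (Finset.mem_range.mp hk)
    rw [iteratedDerivWithin_eq_iteratedDeriv (uniqueDiffOn_Icc hb)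
      (hat.of_le (by exact_mod_cast hk'.trans n.le_succ)) (left_mem_Icc.mpr hb.le), hF0 k hk',
      smul_zero]
  -- The exponent `n + 1 - (p - 1)` is positive, so the surplus power tends to `0` with `t`.
  have hlim : Tendsto (fun t : ℝ => C * t ^ ((n : ℝ) + 1 - (p - 1))) (𝓝 0) (𝓝 0) := by
    have h := (Real.continuousAt_rpow_const 0 ((n : ℝ) + 1 - (p - 1))
      (Or.inr (by linarith))).tendsto.const_mul C
    rwa [Real.zero_rpow (by linarith), mul_zero] at h
  obtain ⟨r, hr, hball⟩ := Metric.eventually_nhds_iff.mp (hlim.eventually (gt_mem_nhds hδ))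
  refine ⟨min r (ε / 2), lt_min hr hb, fun t ht htη => ?_⟩
  have h1 := hC t ⟨ht.le, (htη.trans_le (min_le_right _ _)).le⟩
  rw [hT, sub_zero, sub_zero] at h1
  have h2 : C * t ^ ((n : ℝ) + 1 - (p - 1)) < δ := hball (by
    rw [Real.dist_eq, sub_zero, abs_of_pos ht]
    exact htη.trans_le (min_le_left _ _))
  have h3 : t ^ (n + 1) = t ^ ((n : ℝ) + 1 - (p - 1)) * t ^ (p - 1) := by
    rw [← Real.rpow_add ht, sub_add_cancel]
    exact_mod_cast (Real.rpow_natCast t (n + 1)).symm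
  calc F t ≤ ‖F t‖ := le_abs_self _
    _ ≤ C * t ^ (n + 1) := h1
    _ = C * t ^ ((n : ℝ) + 1 - (p - 1)) * t ^ (p - 1) := by rw [h3, mul_assoc]
    _ ≤ δ * t ^ (p - 1) := mul_le_mul_of_nonneg_right h2.le (Real.rpow_nonneg ht.le _)

/-- The scalar form of one supersolution inequality, with `s` and `t` standing for the values of the
two scaled eigenfunctions. -/
lemma flat_pair_lt {p : ℝ} (hp : 1 < p) {F H : ℝ → ℝ} {ε : ℝ} (hε : 0 < ε)
    (hF : ContDiffOn ℝ (⌊p⌋₊) F (Ioo (-ε) ε)) (hH : ContDiffOn ℝ (⌊p⌋₊) H (Ioo (-ε) ε))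
    (hF0 : ∀ k ≤ ⌊p - 1⌋₊, iteratedDeriv k F 0 = 0)
    (hH0 : ∀ k ≤ ⌊p - 1⌋₊, iteratedDeriv k H 0 = 0)
    {a b c K : ℝ} (ha : 0 ≤ a) (hb : 0 ≤ b) (hc : 0 < c) (hK : 0 < K) :
    ∃ η > (0 : ℝ), ∀ s t, 0 < s → s < η → 0 < t → t < η → t ≤ K * s →
      a * F t + b * H s < c * s ^ (p - 1) := by
  have hKp : 0 < K ^ (p - 1) := Real.rpow_pos_of_pos hK _
  have hD : 0 < a * K ^ (p - 1) + b + 1 := by positivity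
  -- This `δ` makes `δ * (a * K ^ (p - 1) + b)` strictly smaller than `c`.
  obtain ⟨δ, hδdef⟩ : ∃ δ, δ = c / (a * K ^ (p - 1) + b + 1) := ⟨_, rfl⟩
  have hδ : 0 < δ := hδdef ▸ div_pos hc hD
  have hδc : δ * (a * K ^ (p - 1) + b + 1) = c := by
    rw [hδdef, div_mul_cancel₀ _ hD.ne']
  obtain ⟨η₁, hη₁, h₁⟩ := flat_le_rpow hp hε hF hF0 hδ
  obtain ⟨η₂, hη₂, h₂⟩ := flat_le_rpow hp hε hH hH0 hδ
  refine ⟨min η₁ η₂, lt_min hη₁ hη₂, fun s t hs hsη ht htη hts => ?_⟩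
  have hsp : 0 < s ^ (p - 1) := Real.rpow_pos_of_pos hs _
  have hF' : F t ≤ δ * (K ^ (p - 1) * s ^ (p - 1)) := by
    refine (h₁ t ht (htη.trans_le (min_le_left _ _))).trans ?_
    rw [← Real.mul_rpow hK.le hs.le]
    exact mul_le_mul_of_nonneg_left (Real.rpow_le_rpow ht.le hts (by linarith)) hδ.le
  have hH' := h₂ s hs (hsη.trans_le (min_le_right _ _))
  calc a * F t + b * H s
      ≤ a * (δ * (K ^ (p - 1) * s ^ (p - 1))) + b * (δ * s ^ (p - 1)) :=
        add_le_add (mul_le_mul_of_nonneg_left hF' ha) (mul_le_mul_of_nonneg_left hH' hb)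
    _ < a * (δ * (K ^ (p - 1) * s ^ (p - 1))) + b * (δ * s ^ (p - 1)) + δ * s ^ (p - 1) :=
        lt_add_of_pos_right _ (mul_pos hδ hsp)
    _ = c * s ^ (p - 1) := by rw [← hδc]; ring

/-- inequalities (2.12)–(2.13) of the paper. For `ρ > 0` small enough
the pair `(ρ φ_p, ρ φ_q)` satisfies the pointwise strict supersolution inequalities. -/
theorem pointwise_strict_supersolution
    (N : ℕ) (hN : 3 ≤ N)
    (Ω : Set (EuclideanSpace ℝ (Fin N)))
    (hΩne : Ω.Nonempty) (hΩo : IsOpen Ω) (hΩb : Bornology.IsBounded Ω)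
    (p q : ℝ) (hp : 1 < p) (hq : 1 < q)
    (lam1 mu1 lam2 mu2 : ℝ)
    (hlam1 : 0 ≤ lam1) (hmu1 : 0 ≤ mu1) (hlam2 : 0 ≤ lam2) (hmu2 : 0 ≤ mu2)
    (σp σq : ℝ) (hσp : 1 < σp) (hσq : 1 < σq)
    (φp φq : EuclideanSpace ℝ (Fin N) → ℝ)
    (hφpc : ContinuousOn φp (closure Ω)) (hφqc : ContinuousOn φq (closure Ω))
    (hφp_pos : ∀ x ∈ Ω, 0 < φp x) (hφq_pos : ∀ x ∈ Ω, 0 < φq x)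
    -- comparison of the two eigenfunctions
    (C₁ C₂ : ℝ) (hC₁ : 0 < C₁) (hC₂ : 0 < C₂)
    (hcomp₁ : ∀ x ∈ Ω, φp x ≤ C₁ * φq x) (hcomp₂ : ∀ x ∈ Ω, φq x ≤ C₂ * φp x)
    (f g hh gam : ℝ → ℝ)
    (hf_mono : MonotoneOn f (Ici 0)) (hg_mono : MonotoneOn g (Ici 0))
    -- smoothness near `0` and flatness at `0`
    (ε : ℝ) (hε : 0 < ε)
    (hf_sm : ContDiffOn ℝ (⌊p⌋₊) f (Ioo (-ε) ε))
    (hh_sm : ContDiffOn ℝ (⌊p⌋₊) hh (Ioo (-ε) ε))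
    (hg_sm : ContDiffOn ℝ (⌊q⌋₊) g (Ioo (-ε) ε))
    (hgam_sm : ContDiffOn ℝ (⌊q⌋₊) gam (Ioo (-ε) ε))
    (hf0 : ∀ k ≤ ⌊p - 1⌋₊, iteratedDeriv k f 0 = 0)
    (hh0 : ∀ k ≤ ⌊p - 1⌋₊, iteratedDeriv k hh 0 = 0)
    (hg0 : ∀ l ≤ ⌊q - 1⌋₊, iteratedDeriv l g 0 = 0)
    (hgam0 : ∀ l ≤ ⌊q - 1⌋₊, iteratedDeriv l gam 0 = 0) :
    ∃ θ > (0:ℝ), ∀ ρ ∈ Ioc (0:ℝ) θ, ∀ x ∈ Ω,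
      lam1 * f (ρ * φq x) + mu1 * hh (ρ * φp x) < (σp - 1) * (ρ * φp x) ^ (p - 1) ∧
      lam2 * g (ρ * φp x) + mu2 * gam (ρ * φq x) < (σq - 1) * (ρ * φq x) ^ (q - 1) := by
  obtain ⟨η₁, hη₁, h₁⟩ := flat_pair_lt hp hε hf_sm hh_sm hf0 hh0 hlam1 hmu1
    (sub_pos.mpr hσp) hC₂
  obtain ⟨η₂, hη₂, h₂⟩ := flat_pair_lt hq hε hg_sm hgam_sm hg0 hgam0 hlam2 hmu2
    (sub_pos.mpr hσq) hC₁
  have hcpt : IsCompact (closure Ω) := hΩb.isCompact_closure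
  obtain ⟨Mp, hMp⟩ := hcpt.exists_bound_of_continuousOn hφpc
  obtain ⟨Mq, hMq⟩ := hcpt.exists_bound_of_continuousOn hφqc
  -- Any `M > 0` bounding both functions works; `1` guarantees positivity.
  obtain ⟨M, hMdef⟩ : ∃ M, M = max 1 (max Mp Mq) := ⟨_, rfl⟩
  have hM : 0 < M := hMdef ▸ lt_max_of_lt_left one_pos
  have hpM : ∀ x ∈ Ω, φp x ≤ M := fun x hx =>
    (le_abs_self _).trans ((hMp x (subset_closure hx)).trans
      (hMdef ▸ (le_max_left _ _).trans (le_max_right _ _)))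
  have hqM : ∀ x ∈ Ω, φq x ≤ M := fun x hx =>
    (le_abs_self _).trans ((hMq x (subset_closure hx)).trans
      (hMdef ▸ (le_max_right _ _).trans (le_max_right _ _)))
  have hη : 0 < min η₁ η₂ := lt_min hη₁ hη₂
  refine ⟨min η₁ η₂ / (2 * M), by positivity, fun ρ hρ x hx => ?_⟩
  have hρ0 : 0 < ρ := hρ.1
  have hρM : ρ * M < min η₁ η₂ := by
    have := (le_div_iff₀ (by positivity : (0 : ℝ) < 2 * M)).mp hρ.2
    linarith
  have hs : 0 < ρ * φp x := mul_pos hρ0 (hφp_pos x hx)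
  have ht : 0 < ρ * φq x := mul_pos hρ0 (hφq_pos x hx)
  have hsη : ρ * φp x < min η₁ η₂ :=
    (mul_le_mul_of_nonneg_left (hpM x hx) hρ0.le).trans_lt hρM
  have htη : ρ * φq x < min η₁ η₂ :=
    (mul_le_mul_of_nonneg_left (hqM x hx) hρ0.le).trans_lt hρM
  have hts : ρ * φq x ≤ C₂ * (ρ * φp x) := by
    rw [mul_left_comm]
    exact mul_le_mul_of_nonneg_left (hcomp₂ x hx) hρ0.le
  have hst : ρ * φp x ≤ C₁ * (ρ * φq x) := by
    rw [mul_left_comm]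
    exact mul_le_mul_of_nonneg_left (hcomp₁ x hx) hρ0.le
  exact ⟨h₁ _ _ hs (hsη.trans_le (min_le_left _ _)) ht (htη.trans_le (min_le_left _ _)) hts,
    h₂ _ _ ht (htη.trans_le (min_le_right _ _)) hs (hsη.trans_le (min_le_right _ _)) hst⟩
end

section
/- Let p, q > 1 be real. Let f(x) = Σ_{i=1}^m a_i x^{p_i} − c₁ and g(x) = Σ_{j=1}^n b_j x^{q_j} − c₂, where a_i, b_j, p_i, q_j, c₁, c₂ ≥ 0 and p_i q_j < (p−1)(q−1) for all i, j. Then for every M > 0, lim_{s→+∞} f(M (g(s))^{1/(q−1)})/s^{p−1} = 0, i.e. f and g satisfy hypothesis (H3). -/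
/-!
For `s ≥ 1` every power `s ^ Q j` is at most `s ^ K`, where `K` is the largest of the `Q j`
(and `K = 0` if there are none), so `|g s| ≤ C * s ^ K` with `C = ∑ j, B j + c₂`
(`abs_sum_rpow_sub_le`). Hence each term `(M * g s ^ (q - 1)⁻¹) ^ P i` is bounded in absolute value
by a constant times `s ^ (K * (q - 1)⁻¹ * P i)`, and `P i * K < (p - 1) * (q - 1)` makes this
exponent smaller than `p - 1`. So each term divided by `s ^ (p - 1)` tends to `0`
(`tendsto_term`), as does `c₁ / s ^ (p - 1)`.

No sign is assumed for `g s`, which may be negative when `g` is constant: the inequality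
`|x ^ y| ≤ |x| ^ y` holds for all real `x`, also where `x ^ y` takes its conventional value at a
negative base, so one estimate covers all cases.
-/


open Filter Topology Set

/-- A common upper bound for the exponents `Q j` that still satisfies the strict inequality; the
only point is that the index type may be empty, where the value `0` works. -/
lemma exists_exponent_bound {m n : ℕ} {P : Fin m → ℝ} {Q : Fin n → ℝ} {D : ℝ} (hD : 0 < D)
    (hQ : ∀ j, 0 ≤ Q j) (hPQ : ∀ i j, P i * Q j < D) :
    ∃ K, 0 ≤ K ∧ (∀ j, Q j ≤ K) ∧ ∀ i, P i * K < D := by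
  rcases isEmpty_or_nonempty (Fin n) with h | h
  · exact ⟨0, le_rfl, fun j => h.elim j, fun i => by simpa using hD⟩
  · obtain ⟨j₀, hj₀⟩ := Finite.exists_max Q
    exact ⟨Q j₀, hQ j₀, hj₀, fun i => hPQ i j₀⟩

lemma abs_sum_rpow_sub_le {n : ℕ} {B Q : Fin n → ℝ} {c K s : ℝ} (hB : ∀ j, 0 ≤ B j)
    (hc : 0 ≤ c) (hK : 0 ≤ K) (hQK : ∀ j, Q j ≤ K) (hs : 1 ≤ s) :
    |(∑ j, B j * s ^ Q j) - c| ≤ ((∑ j, B j) + c) * s ^ K := by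
  have hs0 : 0 ≤ s := zero_le_one.trans hs
  have h1 : ∑ j, B j * s ^ Q j ≤ (∑ j, B j) * s ^ K := by
    rw [Finset.sum_mul]
    exact Finset.sum_le_sum fun j _ =>
      mul_le_mul_of_nonneg_left (Real.rpow_le_rpow_of_exponent_le hs (hQK j)) (hB j)
  have h0 : 0 ≤ ∑ j, B j * s ^ Q j :=
    Finset.sum_nonneg fun j _ => mul_nonneg (hB j) (Real.rpow_nonneg hs0 _)
  have h2 : c ≤ c * s ^ K := le_mul_of_one_le_right hc (Real.one_le_rpow hs hK)
  rw [add_mul, abs_le]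
  constructor <;> linarith

/-- A function of growth at most `s ^ K`, raised to the powers `r` and then `t`, is
`o(s ^ e)` as soon as `K * r * t < e`. -/
lemma tendsto_term {G : ℝ → ℝ} {C K M r t e : ℝ} (hC : 0 ≤ C) (hM : 0 ≤ M) (hr : 0 ≤ r)
    (ht : 0 ≤ t) (hG : ∀ s, 1 ≤ s → |G s| ≤ C * s ^ K) (hlt : K * r * t < e) :
    Tendsto (fun s : ℝ => (M * G s ^ r) ^ t / s ^ e) atTop (𝓝 0) := by
  have hlim : Tendsto (fun s : ℝ => (M * C ^ r) ^ t * s ^ (-(e - K * r * t))) atTop (𝓝 0) := by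
    simpa using (tendsto_rpow_neg_atTop (sub_pos.2 hlt)).const_mul ((M * C ^ r) ^ t)
  refine squeeze_zero_norm' ?_ hlim
  filter_upwards [eventually_ge_atTop 1] with s hs
  have hs0 : 0 < s := zero_lt_one.trans_le hs
  have hCr : 0 ≤ M * C ^ r := mul_nonneg hM (Real.rpow_nonneg hC _)
  have h1 : |M * G s ^ r| ≤ M * C ^ r * s ^ (K * r) := by
    rw [abs_mul, abs_of_nonneg hM, mul_assoc]
    refine mul_le_mul_of_nonneg_left ?_ hM
    calc |G s ^ r| ≤ |G s| ^ r := Real.abs_rpow_le_abs_rpow _ _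
      _ ≤ (C * s ^ K) ^ r := Real.rpow_le_rpow (abs_nonneg _) (hG s hs) hr
      _ = C ^ r * s ^ (K * r) := by
        rw [Real.mul_rpow hC (Real.rpow_nonneg hs0.le _), ← Real.rpow_mul hs0.le]
  have h2 : |(M * G s ^ r) ^ t| ≤ (M * C ^ r) ^ t * s ^ (K * r * t) :=
    calc |(M * G s ^ r) ^ t| ≤ |M * G s ^ r| ^ t := Real.abs_rpow_le_abs_rpow _ _
      _ ≤ (M * C ^ r * s ^ (K * r)) ^ t := Real.rpow_le_rpow (abs_nonneg _) h1 ht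
      _ = (M * C ^ r) ^ t * s ^ (K * r * t) := by
        rw [Real.mul_rpow hCr (Real.rpow_nonneg hs0.le _), ← Real.rpow_mul hs0.le (K * r)]
  rw [Real.norm_eq_abs, abs_div, abs_of_pos (Real.rpow_pos_of_pos hs0 e), neg_sub,
    Real.rpow_sub hs0, ← mul_div_assoc]
  exact div_le_div_of_nonneg_right h2 (Real.rpow_nonneg hs0.le _)

/-- Example 3.1. The polynomial-type nonlinearities
`f(x) = Σᵢ aᵢ x^{pᵢ} − c₁` and `g(x) = Σⱼ bⱼ x^{qⱼ} − c₂` with nonnegative data and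
`pᵢ qⱼ < (p−1)(q−1)` satisfy hypothesis (H3). -/
theorem example31_H3 (p q : ℝ) (hp : 1 < p) (hq : 1 < q)
    (m n : ℕ) (A : Fin m → ℝ) (P : Fin m → ℝ) (B : Fin n → ℝ) (Q : Fin n → ℝ)
    (c₁ c₂ : ℝ)
    (hA : ∀ i, 0 ≤ A i) (hP : ∀ i, 0 ≤ P i) (hB : ∀ j, 0 ≤ B j) (hQ : ∀ j, 0 ≤ Q j)
    (hc₁ : 0 ≤ c₁) (hc₂ : 0 ≤ c₂)
    (hPQ : ∀ i j, P i * Q j < (p - 1) * (q - 1))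
    (f g : ℝ → ℝ)
    (hf : ∀ x : ℝ, f x = (∑ i, A i * x ^ (P i)) - c₁)
    (hg : ∀ x : ℝ, g x = (∑ j, B j * x ^ (Q j)) - c₂) :
    ∀ M > (0:ℝ),
      Tendsto (fun s : ℝ => f (M * (g s) ^ ((q - 1)⁻¹)) / s ^ (p - 1)) atTop (𝓝 0) := by
  intro M hM
  have hp' : 0 < p - 1 := sub_pos.2 hp
  have hq' : 0 < q - 1 := sub_pos.2 hq
  obtain ⟨K, hK, hQK, hPK⟩ := exists_exponent_bound (mul_pos hp' hq') hQ hPQ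
  have hG : ∀ s, 1 ≤ s → |g s| ≤ ((∑ j, B j) + c₂) * s ^ K := fun s hs => by
    rw [hg]
    exact abs_sum_rpow_sub_le hB hc₂ hK hQK hs
  have hC : 0 ≤ (∑ j, B j) + c₂ := add_nonneg (Finset.sum_nonneg fun j _ => hB j) hc₂
  have hterm : ∀ i, Tendsto (fun s : ℝ => (M * g s ^ (q - 1)⁻¹) ^ P i / s ^ (p - 1))
      atTop (𝓝 0) := fun i => by
    refine tendsto_term hC hM.le (inv_nonneg.2 hq'.le) (hP i) hG ?_
    have h : K * (q - 1)⁻¹ * P i = P i * K / (q - 1) := by ring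
    rw [h, div_lt_iff₀ hq']
    exact hPK i
  have hsum := tendsto_finsetSum Finset.univ fun i _ => (hterm i).const_mul (A i)
  have hconst := (tendsto_rpow_neg_atTop hp').const_mul c₁
  have hlim := hsum.sub hconst
  simp only [mul_zero, Finset.sum_const_zero, sub_zero] at hlim
  refine hlim.congr' ?_
  filter_upwards [eventually_gt_atTop 0] with s hs
  rw [hf, sub_div, Finset.sum_div, Real.rpow_neg hs.le, ← div_eq_mul_inv]
  simp only [mul_div_assoc]
end
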